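/- Fix an integer d ≥ 1, a finite-dimensional complex Hilbert space H, a Clifford system (c_1, …, c_d, γ) on H, and unitaries U_1, …, U_d on H, each commuting with every c_j and with γ. Let δ ≥ 0 satisfy ‖U_j U_l − U_l U_j‖ ≤ δ for all j, l, and let real numbers m, K satisfy 0 < m ≤ K and m² > 4 d² K² δ. Then for every κ ∈ [m, K] the operator D(κ, m) is invertible, and 𝐈(D(K, m)) = 𝐈(D(1, 1)). -/

import Mathlib

noncomputable section

/-- A Clifford system `(c_1, …, c_d, γ)` on a complex Hilbert space `H`:
`c_j* = -c_j`, `c_j c_l + c_l c_j = -2 δ_{jl} 1`, `γ* = γ`, `γ² = 1`, `γ c_j = -c_j γ`. -/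
structure CliffordSystem (H : Type*) [NormedAddCommGroup H] [InnerProductSpace ℂ H]
    [CompleteSpace H] (d : ℕ) where
  c : Fin d → H →L[ℂ] H
  γ : H →L[ℂ] H
  c_skew : ∀ j, star (c j) = -c j
  c_rel : ∀ j l, c j * c l + c l * c j =
    if j = l then (-2 : ℂ) • (1 : H →L[ℂ] H) else 0
  γ_sa : star γ = γ
  γ_sq : γ * γ = 1
  γ_anticomm : ∀ j, γ * c j = -(c j * γ)

variable {H : Type*} [NormedAddCommGroup H] [InnerProductSpace ℂ H] [CompleteSpace H]

/-- `x = (U - U*)/(2i)`, the "imaginary part" of a unitary `U`. -/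
def xPart (U : H →L[ℂ] H) : H →L[ℂ] H := ((2 * Complex.I)⁻¹ : ℂ) • (U - star U)

/-- `y = (U + U*)/2`, the "real part" of a unitary `U`. -/
def yPart (U : H →L[ℂ] H) : H →L[ℂ] H := ((2 : ℂ)⁻¹ : ℂ) • (U + star U)

/-- The massive hermitian Wilson--Dirac operator
`D(κ, m) = κ·Σ_j i x_j c_j + γ·(κ·Σ_j (y_j − 1) + m)`. -/
def wilsonDirac {d : ℕ} (cs : CliffordSystem H d) (U : Fin d → H →L[ℂ] H)
    (κ m : ℝ) : H →L[ℂ] H :=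
  (κ : ℂ) • (∑ j, Complex.I • (xPart (U j) * cs.c j)) +
    cs.γ * ((κ : ℂ) • (∑ j, (yPart (U j) - 1)) + (m : ℂ) • (1 : H →L[ℂ] H))

/-- `f_m(k)² = Σ_j sin²(2π k_j) + (Σ_j (cos(2π k_j) − 1) + m)²`. -/
def fmSq (d : ℕ) (m : ℝ) (k : Fin d → ℝ) : ℝ :=
  ∑ j, Real.sin (2 * Real.pi * k j) ^ 2 +
    (∑ j, (Real.cos (2 * Real.pi * k j) - 1) + m) ^ 2

/-- `E_{>0}(A)`: the sum of the eigenspaces of `A` with positive (real) eigenvalue. -/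
def posSpace (A : H →L[ℂ] H) : Submodule ℂ H :=
  ⨆ (μ : ℝ) (_ : 0 < μ), Module.End.eigenspace (A.toLinearMap) (μ : ℂ)

/-- `E_{<0}(A)`: the sum of the eigenspaces of `A` with negative (real) eigenvalue. -/
def negSpace (A : H →L[ℂ] H) : Submodule ℂ H :=
  ⨆ (μ : ℝ) (_ : μ < 0), Module.End.eigenspace (A.toLinearMap) (μ : ℂ)

/-- `𝐈(A) = (dim E_{>0}(A) − dim E_{<0}(A))/2`, a priori a half-integer. -/
def Ind (A : H →L[ℂ] H) : ℚ :=
  ((Module.finrank ℂ (posSpace A) : ℚ) - (Module.finrank ℂ (negSpace A) : ℚ)) / 2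

end

section NormEstimates

variable {H : Type*} [NormedAddCommGroup H] [InnerProductSpace ℂ H]

theorem abs_re_inner_le (T : H →L[ℂ] H) {r : ℝ} (hT : ‖T‖ ≤ r) (v : H) :
    |(inner ℂ (T v) v).re| ≤ r * ‖v‖ ^ 2 := by
  calc |(inner ℂ (T v) v).re| ≤ ‖inner ℂ (T v) v‖ := Complex.abs_re_le_norm _
    _ ≤ ‖T v‖ * ‖v‖ := norm_inner_le_norm _ _
    _ ≤ (r * ‖v‖) * ‖v‖ := by gcongr; exact T.le_of_opNorm_le hT v
    _ = r * ‖v‖ ^ 2 := by ring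

theorem norm_sum_sum_le {d : ℕ} {T : Fin d → Fin d → H →L[ℂ] H} {δ : ℝ} (hT : ∀ j l, ‖T j l‖ ≤ δ) :
    ‖∑ j, ∑ l, T j l‖ ≤ d ^ 2 * δ := by
  refine (norm_sum_le_of_le _ fun j _ => norm_sum_le_of_le _ fun l _ => hT j l).trans ?_
  simp [sq, mul_assoc]

variable [CompleteSpace H]

theorem norm_le_one_of_star_mul_self {a : H →L[ℂ] H} (ha : star a * a = 1) : ‖a‖ ≤ 1 := by
  have h := CStarRing.norm_star_mul_self (x := a)
  rw [ha] at h
  have h1 : ‖(1 : H →L[ℂ] H)‖ ≤ 1 := ContinuousLinearMap.norm_id_le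
  nlinarith [norm_nonneg a]

theorem norm_mul_le_of_le_one_left {a b : H →L[ℂ] H} {r : ℝ} (ha : ‖a‖ ≤ 1) (hb : ‖b‖ ≤ r) :
    ‖a * b‖ ≤ r :=
  (norm_mul_le a b).trans <| by
    nlinarith [norm_nonneg a, norm_nonneg b]

theorem norm_mul_le_of_le_one_right {a b : H →L[ℂ] H} {r : ℝ} (ha : ‖a‖ ≤ r) (hb : ‖b‖ ≤ 1) :
    ‖a * b‖ ≤ r :=
  (norm_mul_le a b).trans <| by
    nlinarith [norm_nonneg a, norm_nonneg b]

/-- Commutators with a unitary and with its adjoint have comparable norms. -/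
theorem norm_commutator_star_le {A V : H →L[ℂ] H} (hV : V ∈ unitary (H →L[ℂ] H)) {δ : ℝ}
    (h : ‖A * V - V * A‖ ≤ δ) : ‖A * star V - star V * A‖ ≤ δ := by
  have h1 : star V * V = 1 := (Unitary.mem_iff.mp hV).1
  have h2 : V * star V = 1 := (Unitary.mem_iff.mp hV).2
  have key : A * star V - star V * A = -(star V * ((A * V - V * A) * star V)) := by
    have e1 : star V * ((A * V - V * A) * star V) =
        star V * A * (V * star V) - (star V * V) * A * star V := by noncomm_ring
    rw [e1, h1, h2]; noncomm_ring
  rw [key, norm_neg]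
  refine norm_mul_le_of_le_one_left (norm_le_one_of_star_mul_self (by rwa [star_star])) ?_
  exact norm_mul_le_of_le_one_right h (norm_le_one_of_star_mul_self (by rwa [star_star]))

theorem norm_commutator_xPart_le {A V : H →L[ℂ] H} (hV : V ∈ unitary (H →L[ℂ] H)) {δ : ℝ}
    (h : ‖A * V - V * A‖ ≤ δ) : ‖A * xPart V - xPart V * A‖ ≤ δ := by
  have h' := norm_commutator_star_le hV h
  have key : A * xPart V - xPart V * A = ((2 * Complex.I)⁻¹ : ℂ) •
      ((A * V - V * A) - (A * star V - star V * A)) := by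
    simp only [xPart, mul_smul_comm, smul_mul_assoc, ← smul_sub]
    congr 1; noncomm_ring
  have h2 := norm_sub_le (A * V - V * A) (A * star V - star V * A)
  rw [key, norm_smul]
  norm_num
  linarith

theorem norm_commutator_yPart_le {A V : H →L[ℂ] H} (hV : V ∈ unitary (H →L[ℂ] H)) {δ : ℝ}
    (h : ‖A * V - V * A‖ ≤ δ) : ‖A * yPart V - yPart V * A‖ ≤ δ := by
  have h' := norm_commutator_star_le hV h
  have key : A * yPart V - yPart V * A = ((2 : ℂ)⁻¹ : ℂ) •
      ((A * V - V * A) + (A * star V - star V * A)) := by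
    simp only [yPart, mul_smul_comm, smul_mul_assoc, ← smul_sub]
    congr 1; noncomm_ring
  have h2 := norm_add_le (A * V - V * A) (A * star V - star V * A)
  rw [key, norm_smul]
  norm_num
  linarith

/-- `z = 1 - y`, the nonnegative operator `(1 - U)* (1 - U) / 2`. -/
noncomputable def zPart (U : H →L[ℂ] H) : H →L[ℂ] H := 1 - yPart U

theorem norm_commutator_zPart_le {A V : H →L[ℂ] H} (hV : V ∈ unitary (H →L[ℂ] H)) {δ : ℝ}
    (h : ‖A * V - V * A‖ ≤ δ) : ‖A * zPart V - zPart V * A‖ ≤ δ := by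
  have key : A * zPart V - zPart V * A = -(A * yPart V - yPart V * A) := by
    unfold zPart; noncomm_ring
  rw [key, norm_neg]
  exact norm_commutator_yPart_le hV h

theorem zPart_eq {V : H →L[ℂ] H} (hV : V ∈ unitary (H →L[ℂ] H)) :
    zPart V = (2⁻¹ : ℂ) • (star (1 - V) * (1 - V)) := by
  have h1 : star V * V = 1 := (Unitary.mem_iff.mp hV).1
  have e : star (1 - V) * (1 - V) = 1 - V - star V + star V * V := by
    rw [star_sub, star_one]; noncomm_ring
  rw [e, h1, zPart, yPart]
  module

theorem xPart_mul_self {V : H →L[ℂ] H} (hV : V ∈ unitary (H →L[ℂ] H)) :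
    xPart V * xPart V = (2 : ℂ) • zPart V - zPart V * zPart V := by
  have h1 : star V * V = 1 := (Unitary.mem_iff.mp hV).1
  have h2 : V * star V = 1 := (Unitary.mem_iff.mp hV).2
  have hI : ((2 * Complex.I)⁻¹ * (2 * Complex.I)⁻¹ : ℂ) = -(1 / 4) := by
    rw [← mul_inv, show (2 * Complex.I * (2 * Complex.I) : ℂ) = 4 * (Complex.I * Complex.I) by ring,
      Complex.I_mul_I]
    norm_num
  rw [xPart, smul_mul_smul_comm, hI]
  simp only [zPart, yPart, mul_sub, sub_mul, mul_add, add_mul, one_mul, mul_one, smul_mul_assoc,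
    mul_smul_comm, h1, h2]
  module

theorem re_inner_zPart_nonneg {V : H →L[ℂ] H} (hV : V ∈ unitary (H →L[ℂ] H)) (v : H) :
    0 ≤ (inner ℂ (zPart V v) v).re := by
  rw [zPart_eq hV, smul_apply, inner_smul_left,
    mul_apply_eq_comp, ContinuousLinearMap.star_eq_adjoint,
    ContinuousLinearMap.adjoint_inner_left]
  have h : (0 : ℝ) ≤ (inner ℂ ((1 - V) v) ((1 - V) v)).re := inner_self_nonneg (𝕜 := ℂ)
  simpa using h

/-- A product of two almost commuting nonnegative operators is almost nonnegative. -/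
theorem neg_le_re_inner_zPart_mul_zPart {V W : H →L[ℂ] H} (hV : V ∈ unitary (H →L[ℂ] H))
    (hW : W ∈ unitary (H →L[ℂ] H)) {δ : ℝ} (h : ‖V * W - W * V‖ ≤ δ) (v : H) :
    -(δ * ‖v‖ ^ 2) ≤ (inner ℂ ((zPart V * zPart W) v) v).re := by
  set b := 1 - V with hb
  set E := star b * (V * zPart W - zPart W * V) with hE
  have hVn : ‖V‖ ≤ 1 := norm_le_one_of_star_mul_self (Unitary.mem_iff.mp hV).1
  have hbn : ‖star b‖ ≤ 2 := by
    rw [norm_star]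
    have h1 : ‖(1 : H →L[ℂ] H)‖ ≤ 1 := ContinuousLinearMap.norm_id_le
    linarith [norm_sub_le (1 : H →L[ℂ] H) V]
  have hEn : ‖E‖ ≤ 2 * δ :=
    (norm_mul_le _ _).trans (mul_le_mul hbn (norm_commutator_zPart_le hW h) (norm_nonneg _)
      (by norm_num))
  have e : zPart V * zPart W = (2⁻¹ : ℂ) • (star b * (zPart W * b)) - (2⁻¹ : ℂ) • E := by
    rw [zPart_eq hV, ← hb, smul_mul_assoc, ← smul_sub, hE]
    congr 1
    rw [hb]; noncomm_ring
  have hpos := re_inner_zPart_nonneg hW (b v)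
  have herr := (abs_le.mp (abs_re_inner_le E hEn v)).2
  have e2 : (inner ℂ ((zPart V * zPart W) v) v).re =
      2⁻¹ * (inner ℂ (zPart W (b v)) (b v)).re - 2⁻¹ * (inner ℂ (E v) v).re := by
    rw [e, sub_apply, inner_sub_left, smul_apply,
      smul_apply, inner_smul_left, inner_smul_left,
      mul_apply_eq_comp, ContinuousLinearMap.star_eq_adjoint,
      ContinuousLinearMap.adjoint_inner_left, mul_apply_eq_comp]
    simp
  rw [e2]
  linarith

end NormEstimates

section Index

variable {H : Type*} [NormedAddCommGroup H] [InnerProductSpace ℂ H]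

theorem negSpace_eq_posSpace_neg (A : H →L[ℂ] H) : negSpace A = posSpace (-A) := by
  have h : ∀ μ : ℝ, Module.End.eigenspace ((-A).toLinearMap) ((-μ : ℝ) : ℂ) =
      Module.End.eigenspace A.toLinearMap (μ : ℂ) := by
    intro μ
    ext v
    simp
  refine le_antisymm (iSup₂_le fun μ hμ => ?_) (iSup₂_le fun μ hμ => ?_)
  · rw [← h μ]
    exact le_iSup₂_of_le (-μ) (neg_pos.mpr hμ) le_rfl
  · have h' := h (-μ)
    rw [neg_neg] at h'
    rw [h']
    exact le_iSup₂_of_le (-μ) (neg_lt_zero.mpr hμ) le_rfl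

theorem finrank_add_finrank_le_of_inf_eq_bot [FiniteDimensional ℂ H] {S T : Submodule ℂ H}
    (h : S ⊓ T = ⊥) :
    Module.finrank ℂ S + Module.finrank ℂ T ≤ Module.finrank ℂ H := by
  rw [← Submodule.finrank_sup_add_finrank_inf_eq, h, finrank_bot, add_zero]
  exact Submodule.finrank_le _

variable [CompleteSpace H] [FiniteDimensional ℂ H]

/-- Self-adjoint operators are uniformly positive on their positive space. -/
theorem exists_pos_forall_mem_posSpace {A : H →L[ℂ] H} (hA : IsSelfAdjoint A) :
    ∃ g > 0, ∀ v ∈ posSpace A, g * ‖v‖ ^ 2 ≤ (inner ℂ (A v) v).re := by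
  have hS : A.toLinearMap.IsSymmetric :=
    ContinuousLinearMap.isSelfAdjoint_iff_isSymmetric.mp hA
  let b := hS.eigenvectorBasis rfl
  let ev := hS.eigenvalues rfl
  have hb : ∀ i, A (b i) = (ev i : ℂ) • b i := fun i => hS.apply_eigenvectorBasis rfl i
  obtain ⟨g, hg, hgle⟩ : ∃ g > 0, ∀ i, 0 < ev i → g ≤ ev i := by
    rcases (Finset.univ.filter fun i => 0 < ev i).eq_empty_or_nonempty with h | h
    · refine ⟨1, one_pos, fun i hi => ?_⟩
      have : i ∈ Finset.univ.filter fun i => 0 < ev i := by simp [hi]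
      simp [h] at this
    · obtain ⟨i, hi, hmin⟩ := Finset.exists_min_image _ ev h
      exact ⟨ev i, (Finset.mem_filter.mp hi).2, fun k hk => hmin k (by simp [hk])⟩
  refine ⟨g, hg, fun v hv => ?_⟩
  have hzero : ∀ i, ¬ 0 < ev i → inner ℂ (b i) v = 0 := by
    intro i hi
    have hle : posSpace A ≤ (ℂ ∙ b i)ᗮ := by
      refine iSup₂_le fun μ hμ w hw => ?_
      rw [Submodule.mem_orthogonal_singleton_iff_inner_right]
      rw [Module.End.mem_eigenspace_iff] at hw
      have h1 := hS (b i) w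
      rw [hw] at h1
      change inner ℂ (A (b i)) w = _ at h1
      rw [hb, inner_smul_left, inner_smul_right, Complex.conj_ofReal] at h1
      have h2 : ((ev i : ℂ) - μ) * inner ℂ (b i) w = 0 := by rw [sub_mul, h1, sub_self]
      refine (mul_eq_zero.mp h2).resolve_left ?_
      rw [← Complex.ofReal_sub, Complex.ofReal_eq_zero]
      intro h; linarith
    exact Submodule.mem_orthogonal_singleton_iff_inner_right.mp (hle hv)
  have hnorm : ‖v‖ ^ 2 = ∑ i, ‖inner ℂ (b i) v‖ ^ 2 := (b.sum_sq_norm_inner_right v).symm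
  have hform : (inner ℂ (A v) v).re = ∑ i, ev i * ‖inner ℂ (b i) v‖ ^ 2 := by
    rw [← b.sum_inner_mul_inner, Complex.re_sum]
    refine Finset.sum_congr rfl fun i _ => ?_
    have h1 : inner ℂ (A v) (b i) = (ev i : ℂ) * inner ℂ v (b i) := by
      have := hS v (b i)
      change inner ℂ (A v) (b i) = inner ℂ v (A (b i)) at this
      rw [this, hb, inner_smul_right]
    rw [h1, ← inner_conj_symm v (b i), mul_assoc, Complex.conj_mul']
    norm_cast
  rw [hnorm, hform, Finset.mul_sum]
  refine Finset.sum_le_sum fun i _ => ?_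
  by_cases hi : 0 < ev i
  · exact mul_le_mul_of_nonneg_right (hgle i hi) (by positivity)
  · simp [hzero i hi]

theorem re_inner_nonpos_of_mem_negSpace {A : H →L[ℂ] H} (hA : IsSelfAdjoint A) {v : H}
    (hv : v ∈ negSpace A) : (inner ℂ (A v) v).re ≤ 0 := by
  rw [negSpace_eq_posSpace_neg] at hv
  obtain ⟨g, hg, h⟩ := exists_pos_forall_mem_posSpace hA.neg
  have h1 := h v hv
  simp only [neg_apply, inner_neg_left, Complex.neg_re] at h1
  nlinarith [sq_nonneg ‖v‖]

theorem posSpace_sup_negSpace {A : H →L[ℂ] H} (hA : IsSelfAdjoint A) (hu : IsUnit A) :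
    posSpace A ⊔ negSpace A = ⊤ := by
  have hS : A.toLinearMap.IsSymmetric :=
    ContinuousLinearMap.isSelfAdjoint_iff_isSymmetric.mp hA
  rw [eq_top_iff, ← (hS.eigenvectorBasis rfl).toBasis.span_eq, Submodule.span_le]
  rintro _ ⟨i, rfl⟩
  rw [OrthonormalBasis.coe_toBasis]
  have hmem : hS.eigenvectorBasis rfl i ∈
      Module.End.eigenspace A.toLinearMap ((hS.eigenvalues rfl i : ℝ) : ℂ) :=
    Module.End.mem_eigenspace_iff.mpr (hS.apply_eigenvectorBasis rfl i)
  rcases lt_trichotomy (hS.eigenvalues rfl i) 0 with h | h | h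
  · exact Submodule.mem_sup_right
      ((le_iSup₂_of_le (f := fun (μ : ℝ) (_ : μ < 0) =>
        Module.End.eigenspace A.toLinearMap (μ : ℂ)) _ h le_rfl) hmem)
  · exfalso
    rw [h, Module.End.mem_eigenspace_iff, Complex.ofReal_zero, zero_smul] at hmem
    obtain ⟨B, hB⟩ := hu.exists_left_inv
    have h0 : hS.eigenvectorBasis rfl i = 0 := by
      have := congrArg (fun T : H →L[ℂ] H => T (hS.eigenvectorBasis rfl i)) hB
      simp only [mul_apply_eq_comp, one_apply_eq_self] at this
      rw [← this]
      exact (congrArg B hmem).trans (map_zero B)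
    exact (hS.eigenvectorBasis rfl).orthonormal.ne_zero i h0
  · exact Submodule.mem_sup_left
      ((le_iSup₂_of_le (f := fun (μ : ℝ) (_ : 0 < μ) =>
        Module.End.eigenspace A.toLinearMap (μ : ℂ)) _ h le_rfl) hmem)

theorem eventually_posSpace_inf_negSpace {A : H →L[ℂ] H} (hA : IsSelfAdjoint A) :
    ∀ᶠ B in nhds A, IsSelfAdjoint B → posSpace A ⊓ negSpace B = ⊥ := by
  obtain ⟨g, hg, h⟩ := exists_pos_forall_mem_posSpace hA
  filter_upwards [Metric.ball_mem_nhds A hg] with B hB hBs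
  rw [Metric.mem_ball, dist_comm, dist_eq_norm] at hB
  rw [eq_bot_iff]
  rintro v ⟨hv1, hv2⟩
  have h1 := h v hv1
  have h2 := re_inner_nonpos_of_mem_negSpace hBs hv2
  have h3 := (abs_le.mp (abs_re_inner_le (A - B) le_rfl v)).2
  rw [sub_apply, inner_sub_left, Complex.sub_re] at h3
  have h4 : (g - ‖A - B‖) * ‖v‖ ^ 2 ≤ 0 := by linarith
  have h5 : ‖v‖ ^ 2 ≤ 0 := nonpos_of_mul_nonpos_right h4 (by linarith)
  rw [Submodule.mem_bot, ← norm_eq_zero]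
  nlinarith [norm_nonneg v]

theorem posSpace_inf_negSpace {A : H →L[ℂ] H} (hA : IsSelfAdjoint A) :
    posSpace A ⊓ negSpace A = ⊥ :=
  (eventually_posSpace_inf_negSpace hA).self_of_nhds hA

theorem finrank_posSpace_add_finrank_negSpace {A : H →L[ℂ] H} (hA : IsSelfAdjoint A)
    (hu : IsUnit A) : Module.finrank ℂ (posSpace A) + Module.finrank ℂ (negSpace A) =
      Module.finrank ℂ H := by
  rw [← Submodule.finrank_sup_add_finrank_inf_eq, posSpace_sup_negSpace hA hu,
    posSpace_inf_negSpace hA, finrank_top, finrank_bot, add_zero]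

/-- The index is locally constant on invertible self-adjoint operators. -/
theorem eventually_Ind_eq {A : H →L[ℂ] H} (hA : IsSelfAdjoint A) (hu : IsUnit A) :
    ∀ᶠ B in nhds A, IsSelfAdjoint B → IsUnit B → Ind B = Ind A := by
  have hneg : ∀ᶠ B in nhds A, IsSelfAdjoint (-B) → posSpace (-A) ⊓ negSpace (-B) = ⊥ :=
    (continuous_neg.tendsto A).eventually (eventually_posSpace_inf_negSpace hA.neg)
  filter_upwards [eventually_posSpace_inf_negSpace hA, hneg] with B h1 h2 hB hBu
  have h3 := finrank_add_finrank_le_of_inf_eq_bot (h1 hB)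
  have h4 := finrank_add_finrank_le_of_inf_eq_bot (h2 hB.neg)
  rw [← negSpace_eq_posSpace_neg, negSpace_eq_posSpace_neg (-B), neg_neg] at h4
  have h5 := finrank_posSpace_add_finrank_negSpace hA hu
  have h6 := finrank_posSpace_add_finrank_negSpace hB hBu
  have h7 : Module.finrank ℂ (posSpace B) = Module.finrank ℂ (posSpace A) := by omega
  have h8 : Module.finrank ℂ (negSpace B) = Module.finrank ℂ (negSpace A) := by omega
  rw [Ind, Ind, h7, h8]

/-- Homotopy invariance of the index along paths of invertible self-adjoint operators. -/
theorem Ind_eq_of_path (F : unitInterval → H →L[ℂ] H) (hF : Continuous F)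
    (hsa : ∀ s, IsSelfAdjoint (F s)) (hu : ∀ s, IsUnit (F s)) (s t : unitInterval) :
    Ind (F s) = Ind (F t) := by
  have hloc : IsLocallyConstant fun s => Ind (F s) := by
    rw [IsLocallyConstant.iff_eventually_eq]
    intro s
    filter_upwards [(hF.tendsto s).eventually (eventually_Ind_eq (hsa s) (hu s))] with r hr
    exact hr (hsa r) (hu r)
  exact hloc.apply_eq_of_isPreconnected isPreconnected_univ trivial trivial

end Index

section Gap

variable {H : Type*} [NormedAddCommGroup H] [InnerProductSpace ℂ H] [CompleteSpace H]

theorem star_xPart (U : H →L[ℂ] H) : star (xPart U) = xPart U := by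
  rw [xPart, star_smul, star_sub, star_star, ← neg_sub, smul_neg, ← neg_smul]
  congr 1
  simp

theorem star_zPart (U : H →L[ℂ] H) : star (zPart U) = zPart U := by
  rw [zPart, star_sub, star_one, yPart, star_smul, star_add, star_star, add_comm]
  congr 2
  simp

theorem Commute.star_of_mem_unitary {U T : H →L[ℂ] H} (hU : U ∈ unitary (H →L[ℂ] H))
    (h : Commute U T) : Commute (star U) T := by
  have h0 := norm_commutator_star_le (A := T) hU (δ := 0) (by rw [h.eq, sub_self, norm_zero])
  exact (sub_eq_zero.mp (norm_le_zero_iff.mp h0)).symm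

theorem commute_xPart {U T : H →L[ℂ] H} (hU : U ∈ unitary (H →L[ℂ] H)) (h : Commute U T) :
    Commute (xPart U) T :=
  (h.sub_left (h.star_of_mem_unitary hU)).smul_left _

theorem commute_zPart {U T : H →L[ℂ] H} (hU : U ∈ unitary (H →L[ℂ] H)) (h : Commute U T) :
    Commute (zPart U) T :=
  (Commute.one_left T).sub_left ((h.add_left (h.star_of_mem_unitary hU)).smul_left _)

theorem CliffordSystem.norm_c_le_one {d : ℕ} (cs : CliffordSystem H d) (j : Fin d) :
    ‖cs.c j‖ ≤ 1 := by
  refine norm_le_one_of_star_mul_self ?_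
  have h := cs.c_rel j j
  rw [if_pos rfl, ← two_smul ℂ, neg_smul, ← smul_neg] at h
  rw [cs.c_skew, neg_mul, smul_right_injective _ (two_ne_zero' ℂ) h, neg_neg]

theorem CliffordSystem.norm_γ_le_one {d : ℕ} (cs : CliffordSystem H d) : ‖cs.γ‖ ≤ 1 :=
  norm_le_one_of_star_mul_self (by rw [cs.γ_sa, cs.γ_sq])

/-- The massless Dirac part `Σ_j i x_j c_j`. -/
noncomputable def diracPart {d : ℕ} (cs : CliffordSystem H d) (U : Fin d → H →L[ℂ] H) :
    H →L[ℂ] H := ∑ j, Complex.I • (xPart (U j) * cs.c j)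

theorem wilsonDirac_eq {d : ℕ} (cs : CliffordSystem H d) (U : Fin d → H →L[ℂ] H) (κ m : ℝ) :
    wilsonDirac cs U κ m = (κ : ℂ) • diracPart cs U +
      cs.γ * ((m : ℂ) • (1 : H →L[ℂ] H) - (κ : ℂ) • ∑ j, zPart (U j)) := by
  have h : ∑ j, (yPart (U j) - 1) = -∑ j, zPart (U j) := by
    rw [← Finset.sum_neg_distrib]
    exact Finset.sum_congr rfl fun j _ => (neg_sub _ _).symm
  rw [wilsonDirac, h, smul_neg, neg_add_eq_sub, diracPart]

variable {d : ℕ} {cs : CliffordSystem H d} {U : Fin d → H →L[ℂ] H}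

theorem isSelfAdjoint_wilsonDirac
    (hU : ∀ j, U j ∈ unitary (H →L[ℂ] H))
    (hUc : ∀ j l, Commute (U j) (cs.c l))
    (hUγ : ∀ j, Commute (U j) cs.γ) (κ m : ℝ) : IsSelfAdjoint (wilsonDirac cs U κ m) := by
  have hP : star (diracPart cs U) = diracPart cs U := by
    rw [diracPart, star_sum]
    refine Finset.sum_congr rfl fun j _ => ?_
    rw [star_smul, star_mul, star_xPart, cs.c_skew, neg_mul, ← (commute_xPart (hU j) (hUc j j)).eq]
    simp
  have hZ : star (∑ j, zPart (U j)) = ∑ j, zPart (U j) := by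
    simp only [star_sum, star_zPart]
  have hZγ : Commute (∑ j, zPart (U j)) cs.γ :=
    Commute.sum_left _ _ _ fun j _ => commute_zPart (hU j) (hUγ j)
  rw [IsSelfAdjoint, wilsonDirac_eq]
  simp only [star_add, star_smul, star_mul, star_sub, hP, hZ, cs.γ_sa, mul_sub, mul_smul_comm, mul_one,
    hZγ.eq]
  simp

theorem diracPart_mul_γ
    (hU : ∀ j, U j ∈ unitary (H →L[ℂ] H))
    (hUγ : ∀ j, Commute (U j) cs.γ) :
    diracPart cs U * cs.γ = -(cs.γ * diracPart cs U) := by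
  rw [diracPart, Finset.sum_mul, Finset.mul_sum, ← Finset.sum_neg_distrib]
  refine Finset.sum_congr rfl fun j _ => ?_
  have h := (commute_xPart (hU j) (hUγ j)).eq
  rw [smul_mul_assoc, mul_smul_comm, ← smul_neg, ← mul_assoc, ← h, mul_assoc, mul_assoc,
    cs.γ_anticomm, mul_neg, neg_neg]

/-- The square of the Dirac part is `Σ_j x_j²` up to commutators. -/
theorem diracPart_mul_self
    (hU : ∀ j, U j ∈ unitary (H →L[ℂ] H))
    (hUc : ∀ j l, Commute (U j) (cs.c l)) :
    diracPart cs U * diracPart cs U = ∑ j, xPart (U j) * xPart (U j) -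
      (2⁻¹ : ℂ) • ∑ j, ∑ l, (xPart (U l) * xPart (U j) - xPart (U j) * xPart (U l)) *
        (cs.c l * cs.c j) := by
  set x := fun j => xPart (U j)
  have hxc : ∀ j l, x j * cs.c l = cs.c l * x j := fun j l => (commute_xPart (hU j) (hUc j l)).eq
  have hPP : diracPart cs U * diracPart cs U = -∑ j, ∑ l, x j * x l * (cs.c j * cs.c l) := by
    rw [diracPart, Finset.sum_mul_sum, ← Finset.sum_neg_distrib]
    refine Finset.sum_congr rfl fun j _ => ?_
    rw [← Finset.sum_neg_distrib]
    refine Finset.sum_congr rfl fun l _ => ?_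
    rw [smul_mul_smul_comm, Complex.I_mul_I, neg_one_smul]
    change -(x j * cs.c j * (x l * cs.c l)) = _
    rw [mul_assoc, ← mul_assoc (cs.c j), ← hxc, mul_assoc, ← mul_assoc]
  have hsymm : ∑ j, ∑ l, x j * x l * (cs.c j * cs.c l) +
      ∑ j, ∑ l, x j * x l * (cs.c j * cs.c l) =
      ∑ j, ∑ l, (x l * x j - x j * x l) * (cs.c l * cs.c j) - (2 : ℂ) • ∑ j, x j * x j := by
    nth_rewrite 2 [Finset.sum_comm]
    rw [Finset.smul_sum, ← Finset.sum_add_distrib, ← Finset.sum_sub_distrib]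
    refine Finset.sum_congr rfl fun j _ => ?_
    have hdiag : (2 : ℂ) • (x j * x j) =
        -∑ l, x j * x l * (cs.c j * cs.c l + cs.c l * cs.c j) := by
      simp [cs.c_rel]
    rw [hdiag, sub_neg_eq_add, ← Finset.sum_add_distrib, ← Finset.sum_add_distrib]
    refine Finset.sum_congr rfl fun l _ => ?_
    noncomm_ring
  rw [hPP]
  change _ = ∑ j, x j * x j - (2⁻¹ : ℂ) • ∑ j, ∑ l, (x l * x j - x j * x l) * (cs.c l * cs.c j)
  generalize ∑ j, ∑ l, x j * x l * (cs.c j * cs.c l) = S at *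
  have hS : S = (2⁻¹ : ℂ) • (S + S) := by module
  rw [hS, hsymm]
  module

theorem wilsonDirac_mul_self
    (hU : ∀ j, U j ∈ unitary (H →L[ℂ] H))
    (hUγ : ∀ j, Commute (U j) cs.γ) (κ m : ℝ) :
    wilsonDirac cs U κ m * wilsonDirac cs U κ m =
      ((m ^ 2 : ℝ) : ℂ) • (1 : H →L[ℂ] H) + ((2 * κ * (κ - m) : ℝ) : ℂ) • ∑ j, zPart (U j) +
      ((κ ^ 2 : ℝ) : ℂ) • ((∑ j, zPart (U j)) * ∑ j, zPart (U j) - ∑ j, zPart (U j) * zPart (U j)) +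
      ((κ ^ 2 : ℝ) : ℂ) • (diracPart cs U * diracPart cs U - ∑ j, xPart (U j) * xPart (U j)) -
      ((κ ^ 2 : ℝ) : ℂ) • (cs.γ * ((∑ j, zPart (U j)) * diracPart cs U -
        diracPart cs U * ∑ j, zPart (U j))) := by
  have hxx : ∑ j, xPart (U j) * xPart (U j) =
      (2 : ℂ) • ∑ j, zPart (U j) - ∑ j, zPart (U j) * zPart (U j) := by
    rw [Finset.smul_sum, ← Finset.sum_sub_distrib]
    exact Finset.sum_congr rfl fun j _ => xPart_mul_self (hU j)
  have hPγ := diracPart_mul_γ hU hUγ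
  have hZγ : Commute (∑ j, zPart (U j)) cs.γ :=
    Commute.sum_left _ _ _ fun j _ => commute_zPart (hU j) (hUγ j)
  rw [wilsonDirac_eq, hxx]
  generalize ∑ j, zPart (U j) * zPart (U j) = Q at *
  generalize ∑ j, zPart (U j) = Z at *
  generalize diracPart cs U = P at *
  have hPγZ : P * (cs.γ * Z) = -(cs.γ * (P * Z)) := by rw [← mul_assoc, hPγ, neg_mul, mul_assoc]
  have hγZP : cs.γ * Z * P = cs.γ * (Z * P) := mul_assoc _ _ _
  have hγγ : cs.γ * Z * cs.γ = Z := by rw [mul_assoc, hZγ.eq, ← mul_assoc, cs.γ_sq, one_mul]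
  have hγγZ : cs.γ * (cs.γ * Z) = Z := by rw [← mul_assoc, cs.γ_sq, one_mul]
  have hγZγZ : cs.γ * Z * (cs.γ * Z) = Z * Z := by rw [← mul_assoc, hγγ]
  simp only [mul_add, add_mul, mul_sub, sub_mul, smul_mul_assoc, mul_smul_comm, mul_one, hPγ,
    hPγZ, hγZP, hγγ, hγγZ, hγZγZ, cs.γ_sq]
  push_cast
  module

theorem norm_diracPart_mul_self_sub_le
    (hU : ∀ j, U j ∈ unitary (H →L[ℂ] H)) {δ : ℝ}
    (hcomm : ∀ j l, ‖U j * U l - U l * U j‖ ≤ δ)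
    (hUc : ∀ j l, Commute (U j) (cs.c l)) :
    ‖diracPart cs U * diracPart cs U - ∑ j, xPart (U j) * xPart (U j)‖ ≤ d ^ 2 * δ := by
  have h : ‖∑ j, ∑ l, (xPart (U l) * xPart (U j) - xPart (U j) * xPart (U l)) *
      (cs.c l * cs.c j)‖ ≤ d ^ 2 * δ := by
    refine norm_sum_sum_le fun j l => norm_mul_le_of_le_one_right ?_
      (norm_mul_le_of_le_one_left (cs.norm_c_le_one l) (cs.norm_c_le_one j))
    refine norm_commutator_xPart_le (hU j) ?_
    rw [norm_sub_rev]
    exact norm_commutator_xPart_le (hU l) (hcomm j l)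
  rw [diracPart_mul_self hU hUc, sub_sub_cancel_left, norm_neg, norm_smul]
  have h2 : ‖(2⁻¹ : ℂ)‖ = 2⁻¹ := by simp
  rw [h2]
  linarith [norm_nonneg (∑ j, ∑ l, (xPart (U l) * xPart (U j) - xPart (U j) * xPart (U l)) *
      (cs.c l * cs.c j))]

theorem norm_commutator_sum_zPart_diracPart_le
    (hU : ∀ j, U j ∈ unitary (H →L[ℂ] H)) {δ : ℝ}
    (hcomm : ∀ j l, ‖U j * U l - U l * U j‖ ≤ δ)
    (hUc : ∀ j l, Commute (U j) (cs.c l)) :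
    ‖(∑ j, zPart (U j)) * diracPart cs U - diracPart cs U * ∑ j, zPart (U j)‖ ≤ d ^ 2 * δ := by
  have key : (∑ j, zPart (U j)) * diracPart cs U - diracPart cs U * ∑ j, zPart (U j) =
      ∑ j, ∑ l, Complex.I •
        ((zPart (U j) * xPart (U l) - xPart (U l) * zPart (U j)) * cs.c l) := by
    rw [diracPart, Finset.sum_mul, Finset.mul_sum, ← Finset.sum_sub_distrib]
    refine Finset.sum_congr rfl fun j _ => ?_
    rw [Finset.mul_sum, Finset.sum_mul, ← Finset.sum_sub_distrib]
    refine Finset.sum_congr rfl fun l _ => ?_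
    rw [mul_smul_comm, smul_mul_assoc, ← smul_sub, sub_mul, mul_assoc, mul_assoc, mul_assoc,
      (commute_zPart (hU j) (hUc j l)).eq]
  rw [key]
  refine norm_sum_sum_le fun j l => ?_
  rw [norm_smul, Complex.norm_I, one_mul]
  refine norm_mul_le_of_le_one_right ?_ (cs.norm_c_le_one l)
  refine norm_commutator_xPart_le (hU l) ?_
  rw [norm_sub_rev]
  exact norm_commutator_zPart_le (hU j) (hcomm l j)

theorem neg_le_re_inner_sum_zPart_sq_sub
    (hU : ∀ j, U j ∈ unitary (H →L[ℂ] H)) {δ : ℝ}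
    (hcomm : ∀ j l, ‖U j * U l - U l * U j‖ ≤ δ)
    (hδ : 0 ≤ δ) (v : H) :
    -(d ^ 2 * δ * ‖v‖ ^ 2) ≤ (inner ℂ (((∑ j, zPart (U j)) * ∑ j, zPart (U j) -
      ∑ j, zPart (U j) * zPart (U j)) v) v).re := by
  have key : (∑ j, zPart (U j)) * ∑ j, zPart (U j) - ∑ j, zPart (U j) * zPart (U j) =
      ∑ j, ∑ l, if j = l then 0 else zPart (U j) * zPart (U l) := by
    rw [Finset.sum_mul_sum, ← Finset.sum_sub_distrib]
    refine Finset.sum_congr rfl fun j _ => ?_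
    have hdiag : ∑ l, (if j = l then zPart (U j) * zPart (U l) else 0) =
        zPart (U j) * zPart (U j) := by simp
    rw [sub_eq_iff_eq_add, ← hdiag, ← Finset.sum_add_distrib]
    refine Finset.sum_congr rfl fun l _ => ?_
    split_ifs <;> simp
  rw [key]
  simp only [sum_apply, sum_inner, Complex.re_sum]
  have h : ∀ j l, -(δ * ‖v‖ ^ 2) ≤
      (inner ℂ ((if j = l then 0 else zPart (U j) * zPart (U l) : H →L[ℂ] H) v) v).re := by
    intro j l
    split_ifs
    · simp; positivity
    · exact neg_le_re_inner_zPart_mul_zPart (hU j) (hU l) (hcomm j l) v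
  refine le_trans (le_of_eq ?_) (Finset.sum_le_sum fun j _ => Finset.sum_le_sum fun l _ => h j l)
  simp
  ring

/-- The mass gap of the Wilson-Dirac operator. -/
theorem gap_wilsonDirac
    (hU : ∀ j, U j ∈ unitary (H →L[ℂ] H)) {δ : ℝ}
    (hcomm : ∀ j l, ‖U j * U l - U l * U j‖ ≤ δ)
    (hUc : ∀ j l, Commute (U j) (cs.c l)) (hUγ : ∀ j, Commute (U j) cs.γ)
    (hδ : 0 ≤ δ) {κ m : ℝ} (hκ : 0 ≤ κ) (hmκ : m ≤ κ) (v : H) :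
    (m ^ 2 - 3 * d ^ 2 * κ ^ 2 * δ) * ‖v‖ ^ 2 ≤ ‖wilsonDirac cs U κ m v‖ ^ 2 := by
  have hsa := isSelfAdjoint_wilsonDirac hU hUc hUγ κ m
  have hD : ‖wilsonDirac cs U κ m v‖ ^ 2 =
      (inner ℂ ((wilsonDirac cs U κ m * wilsonDirac cs U κ m) v) v).re := by
    have h := ContinuousLinearMap.isSelfAdjoint_iff_isSymmetric.mp hsa
      (wilsonDirac cs U κ m v) v
    rw [mul_apply_eq_comp]
    refine Eq.trans ?_ (congrArg Complex.re h.symm)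
    exact (inner_self_eq_norm_sq (𝕜 := ℂ) _).symm
  have h1 : 0 ≤ (inner ℂ ((∑ j, zPart (U j)) v) v).re := by
    simp only [sum_apply, sum_inner, Complex.re_sum]
    exact Finset.sum_nonneg fun j _ => re_inner_zPart_nonneg (hU j) v
  have h2 := neg_le_re_inner_sum_zPart_sq_sub hU hcomm hδ v
  have h3 := (abs_le.mp (abs_re_inner_le _
    (norm_diracPart_mul_self_sub_le (cs := cs) hU hcomm hUc) v)).1
  have h4 := (abs_le.mp (abs_re_inner_le _ (norm_mul_le_of_le_one_left cs.norm_γ_le_one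
    (norm_commutator_sum_zPart_diracPart_le (cs := cs) hU hcomm hUc)) v)).2
  have h0 : (inner ℂ v v).re = ‖v‖ ^ 2 := inner_self_eq_norm_sq (𝕜 := ℂ) v
  rw [hD, wilsonDirac_mul_self hU hUγ]
  generalize (∑ j, zPart (U j)) * ∑ j, zPart (U j) - ∑ j, zPart (U j) * zPart (U j) = A at *
  generalize diracPart cs U * diracPart cs U - ∑ j, xPart (U j) * xPart (U j) = B at *
  generalize cs.γ * ((∑ j, zPart (U j)) * diracPart cs U -
    diracPart cs U * ∑ j, zPart (U j)) = C at *
  simp only [add_apply, sub_apply, smul_apply, inner_add_left, inner_sub_left, inner_smul_left,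
    Complex.conj_ofReal, Complex.add_re, Complex.sub_re, Complex.re_ofReal_mul, one_apply_eq_self,
    h0]
  have h5 := mul_nonneg (mul_nonneg (mul_nonneg zero_le_two hκ) (sub_nonneg.mpr hmκ)) h1
  have h6 := mul_le_mul_of_nonneg_left h2 (sq_nonneg κ)
  have h7 := mul_le_mul_of_nonneg_left h3 (sq_nonneg κ)
  have h8 := mul_le_mul_of_nonneg_left h4 (sq_nonneg κ)
  linarith

theorem isUnit_wilsonDirac [FiniteDimensional ℂ H]
    (hU : ∀ j, U j ∈ unitary (H →L[ℂ] H)) {δ : ℝ}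
    (hcomm : ∀ j l, ‖U j * U l - U l * U j‖ ≤ δ)
    (hUc : ∀ j l, Commute (U j) (cs.c l))
    (hUγ : ∀ j, Commute (U j) cs.γ) (hδ : 0 ≤ δ) {κ m : ℝ} (hκ : 0 ≤ κ) (hmκ : m ≤ κ)
    (hgap : 4 * (d : ℝ) ^ 2 * κ ^ 2 * δ < m ^ 2) : IsUnit (wilsonDirac cs U κ m) := by
  have hinj : Function.Injective (wilsonDirac cs U κ m) := by
    rw [injective_iff_map_eq_zero]
    intro v hv
    have h := gap_wilsonDirac hU hcomm hUc hUγ hδ hκ hmκ v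
    rw [hv, norm_zero] at h
    have hpos : 0 < m ^ 2 - 3 * (d : ℝ) ^ 2 * κ ^ 2 * δ := by
      have : 0 ≤ (d : ℝ) ^ 2 * κ ^ 2 * δ := by positivity
      linarith
    have hv2 : ‖v‖ ^ 2 ≤ 0 := nonpos_of_mul_nonpos_right (by simpa using h) hpos
    exact norm_eq_zero.mp (pow_eq_zero_iff two_ne_zero |>.mp (le_antisymm hv2 (sq_nonneg _)))
  rw [ContinuousLinearMap.isUnit_iff_bijective]
  exact ⟨hinj, LinearMap.injective_iff_surjective.mp hinj⟩

end Gap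

/-- under the gap condition `m² > 4d²K²δ`, the operators `D(κ,m)` are
invertible for `κ ∈ [m,K]` and `𝐈(D(K,m)) = 𝐈(D(1,1))`. -/
theorem statement6 (d : ℕ) (hd : 1 ≤ d) {H : Type*} [NormedAddCommGroup H]
    [InnerProductSpace ℂ H] [FiniteDimensional ℂ H] (cs : CliffordSystem H d)
    (U : Fin d → H →L[ℂ] H) (hU : ∀ j, U j ∈ unitary (H →L[ℂ] H))
    (hUc : ∀ j l, Commute (U j) (cs.c l)) (hUγ : ∀ j, Commute (U j) cs.γ)
    (δ : ℝ) (hδ : 0 ≤ δ) (hcomm : ∀ j l, ‖U j * U l - U l * U j‖ ≤ δ)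
    (m K : ℝ) (hm : 0 < m) (hmK : m ≤ K)
    (hgap : m ^ 2 > 4 * (d : ℝ) ^ 2 * K ^ 2 * δ) :
    (∀ κ ∈ Set.Icc m K, IsUnit (wilsonDirac cs U κ m)) ∧
      Ind (wilsonDirac cs U K m) = Ind (wilsonDirac cs U 1 1) := by
  have hunit : ∀ κ n : ℝ, 0 < n → n ≤ κ → m * κ ≤ n * K → IsUnit (wilsonDirac cs U κ n) := by
    intro κ n hn hnκ hr
    have hK : 0 < K := hm.trans_le hmK
    refine isUnit_wilsonDirac hU hcomm hUc hUγ hδ (hn.le.trans hnκ) hnκ ?_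
    have hsq : (m * κ) ^ 2 ≤ (n * K) ^ 2 :=
      pow_le_pow_left₀ (mul_nonneg hm.le (hn.le.trans hnκ)) hr 2
    have hlt := mul_lt_mul_of_pos_right hgap (pow_pos (hn.trans_le hnκ) 2)
    have hK2 : 0 < K ^ 2 := pow_pos hK 2
    refine lt_of_mul_lt_mul_right ?_ hK2.le
    linarith
  refine ⟨fun κ hκ => hunit κ m hm hκ.1 (mul_le_mul_of_nonneg_left hκ.2 hm.le), ?_⟩
  let F : unitInterval → H →L[ℂ] H := fun s =>
    wilsonDirac cs U ((1 - s) * K + s) ((1 - s) * m + s)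
  have hF : Continuous F := by
    simp only [F, wilsonDirac]
    fun_prop
  have hFu : ∀ s, IsUnit (F s) := by
    intro s
    have hs0 : (0 : ℝ) ≤ s := s.2.1
    have hs1 : (0 : ℝ) ≤ 1 - s := sub_nonneg.mpr s.2.2
    apply hunit
    · rcases hs0.eq_or_lt with h | h
      · rw [← h]; simpa using hm
      · nlinarith [mul_nonneg hs1 hm.le]
    · nlinarith [mul_le_mul_of_nonneg_left hmK hs1]
    · nlinarith [mul_le_mul_of_nonneg_left hmK hs0]
  have h := Ind_eq_of_path F hF (fun s => isSelfAdjoint_wilsonDirac hU hUc hUγ _ _) hFu 0 1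
  simpa [F] using h
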